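/- arXiv:gr-qc/0601124 — 2 statements merged into one kernel-verified Lean document; each statement's English description precedes it below -/
import Mathlib

section
/- For every ε > 0 and every pair q₀, q₁ : ℝ² → ℂ of C^∞ functions which are 1-periodic in both variables, there exists a symmetric tensor field k (a C^∞ map from ℝ³ to symmetric real 3×3 matrices, 1-periodic in the second and third variables) such that (M k)₁(x,y,z) = 0 whenever x ∈ {0,1}, (curl k)_{ij}(0,y,z) m_i m_j = q₀(y,z) and (curl k)_{ij}(1,y,z) m_i m_j = q₁(y,z) for all (y,z) ∈ ℝ², and such that ∫_Σ Σ_{i,j} k_{ij}² < ε², ∫_Σ Σ_{i,j} (curl k)_{ij}² < ε², and ∫_Σ Σ_i ( (M k)_i² + Σ_j (∂_j (M k)_i)² ) < ε². -/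
open MeasureTheory

/-- Partial derivative in the `i`-th coordinate direction (coordinates `x,y,z ↔ 0,1,2`). -/
noncomputable def pd (i : Fin 3) (f : (Fin 3 → ℝ) → ℝ) : (Fin 3 → ℝ) → ℝ :=
  fun p => fderiv ℝ f p (Pi.single i 1)

/-- 1-periodicity in the second and third variables. -/
def PerYZ (f : (Fin 3 → ℝ) → ℝ) : Prop :=
  ∀ p : Fin 3 → ℝ, f (p + Pi.single 1 1) = f p ∧ f (p + Pi.single 2 1) = f p

/-- 1-periodicity in both variables, for functions on `ℝ²`. -/
def PerBoth {α : Type*} (G : (Fin 2 → ℝ) → α) : Prop :=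
  ∀ q : Fin 2 → ℝ, G (q + Pi.single 0 1) = G q ∧ G (q + Pi.single 1 1) = G q

/-- The unit cube in `ℝ³`, the fundamental domain of `Σ = (0,1) × T²`. -/
def Cube : Set (Fin 3 → ℝ) := Set.Icc 0 1

/-- The alternating symbol `ε_{ijk}` with `ε₀₁₂ = 1`. -/
noncomputable def epsR (i j k : Fin 3) : ℝ :=
  (((i : ℕ) : ℝ) - ((j : ℕ) : ℝ)) * (((j : ℕ) : ℝ) - ((k : ℕ) : ℝ))
    * (((k : ℕ) : ℝ) - ((i : ℕ) : ℝ)) / 2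

/-- The complex null vector `m = (0, 1, i)/√2`. -/
noncomputable def mC : Fin 3 → ℂ := ![0, 1 / (Real.sqrt 2 : ℂ), Complex.I / (Real.sqrt 2 : ℂ)]

/-- The curl of a symmetric tensor field: `(curl k)_{ij} = ½(ε_{abi}∂ₐk_{bj} + ε_{abj}∂ₐk_{bi})`. -/
noncomputable def curlT (k : Fin 3 → Fin 3 → (Fin 3 → ℝ) → ℝ) (i j : Fin 3) :
    (Fin 3 → ℝ) → ℝ :=
  fun p => (∑ a, ∑ b, (epsR a b i * pd a (k b j) p + epsR a b j * pd a (k b i) p)) / 2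

/-- The momentum operator `(M k)_i = ∂ᵢ(k_{jj}) - ∂ⱼ k_{ij}`. -/
noncomputable def momT (k : Fin 3 → Fin 3 → (Fin 3 → ℝ) → ℝ) (i : Fin 3) :
    (Fin 3 → ℝ) → ℝ :=
  fun p => ∑ j, (pd i (k j j) p - pd j (k i j) p)

/-
Near each face take a boundary layer of width `1/n`: the tensor
`-(1 - x)ⁿ⁺¹ / (n + 1) * K⁰(y, z) + xⁿ⁺¹ / (n + 1) * K¹(y, z)`. It tends to zero, its `x`-derivative
`(1 - x)ⁿ K⁰ + xⁿ K¹` stays bounded and tends to zero away from the faces, where it takes the values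
`K⁰` and `K¹`. If `K⁰` and `K¹` are transverse (`K₁ⱼ = 0`) then `(curl k)(m, m) = i (∂ₓ k)(m, m)`,
so the boundary values can be prescribed freely. If they are moreover traceless then the momentum
operator only differentiates in `y` and `z`, so `M k` is again a boundary layer; hence `M k` and
its first derivatives are as small as `k` and its first derivatives.
-/

open Filter Topology

/-! ### Bounded convergence to zero -/

/-- Bounded convergence: `F n → 0` almost everywhere, with a bound uniform in `n`. This is the form
of smallness under which integrals tend to zero and which is stable under sums and products. -/
structure BoundedlyNull {α : Type*} [MeasurableSpace α] (μ : Measure α) (F : ℕ → α → ℝ) :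
    Prop where
  aestronglyMeasurable : ∀ n, AEStronglyMeasurable (F n) μ
  bounded : ∃ C, ∀ n, ∀ᵐ x ∂μ, |F n x| ≤ C
  tendsto : ∀ᵐ x ∂μ, Tendsto (fun n => F n x) atTop (𝓝 0)

namespace BoundedlyNull

section MeasurableSpace

variable {α ι : Type*} [MeasurableSpace α] {μ : Measure α} {F G : ℕ → α → ℝ}

lemma zero : BoundedlyNull μ fun _ _ => 0 :=
  ⟨fun _ => aestronglyMeasurable_const, ⟨0, by simp⟩, .of_forall fun _ => tendsto_const_nhds⟩

lemma add (hF : BoundedlyNull μ F) (hG : BoundedlyNull μ G) :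
    BoundedlyNull μ fun n x => F n x + G n x := by
  obtain ⟨C, hC⟩ := hF.bounded
  obtain ⟨D, hD⟩ := hG.bounded
  refine ⟨fun n => (hF.aestronglyMeasurable n).add (hG.aestronglyMeasurable n),
    ⟨C + D, fun n => ?_⟩, ?_⟩
  · filter_upwards [hC n, hD n] with x hCx hDx
    exact (abs_add_le _ _).trans (add_le_add hCx hDx)
  · filter_upwards [hF.tendsto, hG.tendsto] with x hFx hGx
    simpa only [add_zero] using hFx.add hGx

lemma sum {s : Finset ι} {F : ι → ℕ → α → ℝ} (hF : ∀ i ∈ s, BoundedlyNull μ (F i)) :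
    BoundedlyNull μ fun n x => ∑ i ∈ s, F i n x := by
  classical
  induction s using Finset.induction_on with
  | empty => simpa only [Finset.sum_empty] using zero
  | insert i s hi ih =>
    obtain ⟨hFi, hFs⟩ := Finset.forall_mem_insert .. |>.1 hF
    simpa only [Finset.sum_insert hi] using hFi.add (ih hFs)

lemma mul_bounded (hF : BoundedlyNull μ F) (hG : ∀ n, AEStronglyMeasurable (G n) μ)
    (hGb : ∃ D, ∀ n, ∀ᵐ x ∂μ, |G n x| ≤ D) : BoundedlyNull μ fun n x => F n x * G n x := by
  obtain ⟨C, hC⟩ := hF.bounded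
  obtain ⟨D, hD⟩ := hGb
  refine ⟨fun n => (hF.aestronglyMeasurable n).mul (hG n), ⟨C * D, fun n => ?_⟩, ?_⟩
  · filter_upwards [hC n, hD n] with x hCx hDx
    rw [abs_mul]
    exact mul_le_mul hCx hDx (abs_nonneg _) ((abs_nonneg _).trans hCx)
  · filter_upwards [hF.tendsto, ae_all_iff.2 hD] with x hFx hDx
    exact hFx.zero_mul_isBoundedUnder_le (isBoundedUnder_of ⟨D, hDx⟩)

lemma mul_const (hF : BoundedlyNull μ F) (c : ℝ) : BoundedlyNull μ fun n x => F n x * c :=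
  hF.mul_bounded (fun _ => aestronglyMeasurable_const) ⟨|c|, by simp⟩

lemma sq (hF : BoundedlyNull μ F) : BoundedlyNull μ fun n x => F n x ^ 2 := by
  simpa only [pow_two] using hF.mul_bounded hF.aestronglyMeasurable hF.bounded

lemma pow {w : α → ℝ} (hw : AEStronglyMeasurable w μ) (hw1 : ∀ᵐ x ∂μ, |w x| < 1) :
    BoundedlyNull μ fun n x => w x ^ n := by
  refine ⟨fun n => hw.pow n, ⟨1, fun n => ?_⟩, ?_⟩
  · filter_upwards [hw1] with x hx
    simpa only [abs_pow] using pow_le_one₀ (abs_nonneg _) hx.le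
  · filter_upwards [hw1] with x hx
    exact tendsto_pow_atTop_nhds_zero_of_abs_lt_one hx

lemma tendsto_integral [IsFiniteMeasure μ] (hF : BoundedlyNull μ F) :
    Tendsto (fun n => ∫ x, F n x ∂μ) atTop (𝓝 0) := by
  obtain ⟨C, hC⟩ := hF.bounded
  simpa only [integral_zero] using tendsto_integral_of_dominated_convergence (fun _ => C)
    hF.aestronglyMeasurable (integrable_const C) hC hF.tendsto

end MeasurableSpace

lemma mul_continuous {α : Type*} [TopologicalSpace α] [MeasurableSpace α] [OpensMeasurableSpace α]
    [T2Space α] {μ : Measure α} {K : Set α} (hK : IsCompact K) {F : ℕ → α → ℝ}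
    (hF : BoundedlyNull (μ.restrict K) F) {g : α → ℝ} (hg : Continuous g) :
    BoundedlyNull (μ.restrict K) fun n x => F n x * g x := by
  obtain ⟨D, hD⟩ := hK.exists_bound_of_continuousOn hg.continuousOn
  refine hF.mul_bounded (G := fun _ => g) (fun _ => hg.aestronglyMeasurable)
    ⟨D, fun _ => ae_restrict_of_forall_mem hK.measurableSet hD⟩

end BoundedlyNull

/-! ### Curl and momentum of transverse and traceless tensors -/

lemma boundedlyNull_curlT {μ : Measure (Fin 3 → ℝ)} {k : ℕ → Fin 3 → Fin 3 → (Fin 3 → ℝ) → ℝ}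
    (hk : ∀ c i j, BoundedlyNull μ fun n => pd c (k n i j)) (i j : Fin 3) :
    BoundedlyNull μ fun n => curlT (k n) i j := by
  have h := (BoundedlyNull.sum (s := Finset.univ) fun a _ => .sum (s := Finset.univ) fun b _ =>
    ((hk a b j).mul_const (epsR a b i)).add ((hk a b i).mul_const (epsR a b j))).mul_const 2⁻¹
  simpa +unfoldPartialApp only [curlT, div_eq_mul_inv, mul_comm (epsR _ _ _)] using h

lemma pd_zero_fun (i : Fin 3) (p : Fin 3 → ℝ) : pd i 0 p = 0 := by
  simp [pd]

lemma momT_of_traceless {k : Fin 3 → Fin 3 → (Fin 3 → ℝ) → ℝ}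
    (hk : ∀ i, Differentiable ℝ (k i i)) (htr : ∀ p, ∑ i, k i i p = 0) (i : Fin 3)
    (p : Fin 3 → ℝ) : momT k i p = -∑ j, pd j (k i j) p := by
  have htrace : ∑ j, pd i (k j j) p = 0 := by
    have h : ∑ j, fderiv ℝ (k j j) p = 0 := by
      rw [← fderiv_fun_sum fun j _ => hk j p, funext htr, fderiv_const_apply]
    simpa only [pd, sum_apply, zero_apply]
      using congrArg (· (Pi.single i 1)) h
  simp only [momT, Finset.sum_sub_distrib, htrace, zero_sub]

/-- The complex component `t(m, m) = tᵢⱼ mᵢ mⱼ` of a real `3 × 3` tensor. -/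
noncomputable def mComponent (t : Fin 3 → Fin 3 → ℝ) : ℂ :=
  ∑ i, ∑ j, (t i j : ℂ) * mC i * mC j

lemma mComponent_eq (t : Fin 3 → Fin 3 → ℝ) :
    mComponent t = ((t 1 1 - t 2 2) + Complex.I * (t 1 2 + t 2 1)) / 2 := by
  have hsqrt : ((√2 : ℝ) : ℂ) ^ 2 = 2 := by
    rw [← Complex.ofReal_pow, Real.sq_sqrt zero_le_two, Complex.ofReal_ofNat]
  have hsqrt0 : ((√2 : ℝ) : ℂ) ≠ 0 := by simp
  simp only [mComponent, mC, Fin.sum_univ_three, Matrix.cons_val]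
  field_simp
  simp only [hsqrt]
  linear_combination 2 * (t 2 2 : ℂ) * Complex.I_sq

lemma mComponent_curlT_of_transverse {k : Fin 3 → Fin 3 → (Fin 3 → ℝ) → ℝ}
    (hk : ∀ j, k 0 j = 0) (p : Fin 3 → ℝ) :
    mComponent (fun i j => curlT k i j p) =
      Complex.I * mComponent (fun i j => pd 0 (k i j) p) := by
  have hyy : curlT k 1 1 p = -pd 0 (k 2 1) p := by
    simp only [curlT, epsR, Fin.sum_univ_three, hk, pd_zero_fun, Fin.val_zero, Fin.val_one,
      Fin.val_two, Nat.cast_zero, Nat.cast_one, Nat.cast_ofNat]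
    ring
  have hzz : curlT k 2 2 p = pd 0 (k 1 2) p := by
    simp only [curlT, epsR, Fin.sum_univ_three, hk, pd_zero_fun, Fin.val_zero, Fin.val_one,
      Fin.val_two, Nat.cast_zero, Nat.cast_one, Nat.cast_ofNat]
    ring
  have hyz : curlT k 1 2 p = (pd 0 (k 1 1) p - pd 0 (k 2 2) p) / 2 := by
    simp only [curlT, epsR, Fin.sum_univ_three, hk, pd_zero_fun, Fin.val_zero, Fin.val_one,
      Fin.val_two, Nat.cast_zero, Nat.cast_one, Nat.cast_ofNat]
    ring
  have hzy : curlT k 2 1 p = (pd 0 (k 1 1) p - pd 0 (k 2 2) p) / 2 := by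
    simp only [curlT, epsR, Fin.sum_univ_three, hk, pd_zero_fun, Fin.val_zero, Fin.val_one,
      Fin.val_two, Nat.cast_zero, Nat.cast_one, Nat.cast_ofNat]
    ring
  simp only [mComponent_eq, hyy, hzz, hyz, hzy]
  push_cast
  linear_combination -((pd 0 (k 1 2) p : ℂ) + pd 0 (k 2 1) p) / 2 * Complex.I_sq

/-- The symmetric traceless tensor `t` with `t₁ⱼ = 0` and `t(m, m) = -i w`. -/
noncomputable def ttTensor (w : ℂ) : Fin 3 → Fin 3 → ℝ :=
  ![![0, 0, 0], ![0, w.im, -w.re], ![0, -w.re, -w.im]]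

lemma ttTensor_symm (w : ℂ) (i j : Fin 3) : ttTensor w i j = ttTensor w j i := by
  fin_cases i <;> fin_cases j <;> rfl

lemma ttTensor_zero_left (w : ℂ) (j : Fin 3) : ttTensor w 0 j = 0 := by
  fin_cases j <;> rfl

lemma sum_ttTensor_diag (w : ℂ) : ∑ i, ttTensor w i i = 0 := by
  simp [ttTensor, Fin.sum_univ_three]

lemma mComponent_ttTensor (w : ℂ) : mComponent (ttTensor w) = -Complex.I * w := by
  rw [mComponent_eq]
  apply Complex.ext <;> simp [ttTensor]

lemma contDiff_ttTensor {n : WithTop ℕ∞} (i j : Fin 3) :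
    ContDiff ℝ n fun w => ttTensor w i j := by
  have hre : ContDiff ℝ n Complex.re := Complex.reCLM.contDiff
  have him : ContDiff ℝ n Complex.im := Complex.imCLM.contDiff
  fin_cases i <;> fin_cases j
  exacts [contDiff_const, contDiff_const, contDiff_const, contDiff_const, him, hre.neg,
    contDiff_const, hre.neg, him.neg]

/-! ### Boundary layers -/

lemma tail_eq_vecCons (p : Fin 3 → ℝ) : (Fin.tail p : Fin 2 → ℝ) = ![p 1, p 2] := by
  ext l
  fin_cases l <;> rfl

lemma tail_add_smul_single_zero {d : ℕ} (p : Fin (d + 1) → ℝ) (t : ℝ) :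
    (Fin.tail (p + t • Pi.single 0 1) : Fin d → ℝ) = Fin.tail p := by
  ext l
  simp [Fin.tail]

lemma tail_add_smul_single_succ {d : ℕ} (p : Fin (d + 1) → ℝ) (t : ℝ) (j : Fin d) :
    (Fin.tail (p + t • Pi.single j.succ 1) : Fin d → ℝ) = Fin.tail p + t • Pi.single j 1 := by
  ext l
  simp [Fin.tail, Pi.single_apply]

lemma contDiff_tail {d : ℕ} {n : WithTop ℕ∞} :
    ContDiff ℝ n fun p : Fin (d + 1) → ℝ => (Fin.tail p : Fin d → ℝ) :=
  contDiff_pi.2 fun j => contDiff_apply ℝ ℝ j.succ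

/-- Partial derivative in the `j`-th coordinate of the face, the analogue of `pd` on `ℝ²`. -/
noncomputable def facePd (j : Fin 2) (g : (Fin 2 → ℝ) → ℝ) : (Fin 2 → ℝ) → ℝ :=
  fun s => fderiv ℝ g s (Pi.single j 1)

/-- The antiderivative of `x ↦ xⁿ` that vanishes at `0`. -/
noncomputable def profile (n : ℕ) (x : ℝ) : ℝ := x ^ (n + 1) / (n + 1)

/-- The function whose `x`-derivative is `(1 - x)ⁿ g₀(y, z) + xⁿ g₁(y, z)`, so that it concentrates
at the two faces. -/
noncomputable def boundaryLayer (n : ℕ) (g₀ g₁ : (Fin 2 → ℝ) → ℝ) : (Fin 3 → ℝ) → ℝ :=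
  fun p => -profile n (1 - p 0) * g₀ (Fin.tail p) + profile n (p 0) * g₁ (Fin.tail p)

lemma pd_eq_of_hasLineDerivAt {f : (Fin 3 → ℝ) → ℝ} {p : Fin 3 → ℝ} {i : Fin 3} {f' : ℝ}
    (hf : DifferentiableAt ℝ f p) (h : HasLineDerivAt ℝ f f' p (Pi.single i 1)) :
    pd i f p = f' :=
  hf.lineDeriv_eq_fderiv.symm.trans h.lineDeriv

lemma hasDerivAt_profile (n : ℕ) (x : ℝ) : HasDerivAt (profile n) (x ^ n) x := by
  have h := (hasDerivAt_pow (n + 1) x).div_const ((n : ℝ) + 1)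
  rwa [Nat.cast_succ, Nat.add_sub_cancel, mul_div_cancel_left₀ _ n.cast_add_one_ne_zero] at h

section BoundaryLayer

variable {g₀ g₁ : (Fin 2 → ℝ) → ℝ}

lemma contDiff_facePd {m : WithTop ℕ∞} {g : (Fin 2 → ℝ) → ℝ} (hg : ContDiff ℝ (m + 1) g)
    (j : Fin 2) : ContDiff ℝ m (facePd j g) :=
  (hg.fderiv_right le_rfl).clm_apply contDiff_const

lemma contDiff_boundaryLayer {m : WithTop ℕ∞} (hg₀ : ContDiff ℝ m g₀) (hg₁ : ContDiff ℝ m g₁)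
    (n : ℕ) : ContDiff ℝ m (boundaryLayer n g₀ g₁) := by
  have hprofile : ContDiff ℝ m (profile n) := by unfold profile; fun_prop
  have hx : ContDiff ℝ m fun p : Fin 3 → ℝ => p 0 := contDiff_apply ℝ ℝ 0
  exact ((hprofile.comp (contDiff_const.sub hx)).neg.mul (hg₀.comp contDiff_tail)).add
    ((hprofile.comp hx).mul (hg₁.comp contDiff_tail))

lemma perYZ_boundaryLayer (hg₀ : PerBoth g₀) (hg₁ : PerBoth g₁) (n : ℕ) :
    PerYZ (boundaryLayer n g₀ g₁) := by
  intro p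
  have hy : (Fin.tail (p + Pi.single 1 1) : Fin 2 → ℝ) = Fin.tail p + Pi.single 0 1 := by
    simpa using tail_add_smul_single_succ p 1 0
  have hz : (Fin.tail (p + Pi.single 2 1) : Fin 2 → ℝ) = Fin.tail p + Pi.single 1 1 := by
    simpa using tail_add_smul_single_succ p 1 1
  simp [boundaryLayer, hy, hz, hg₀ _, hg₁ _]

lemma differentiable_boundaryLayer (hg₀ : Differentiable ℝ g₀) (hg₁ : Differentiable ℝ g₁)
    (n : ℕ) : Differentiable ℝ (boundaryLayer n g₀ g₁) := by
  unfold boundaryLayer profile Fin.tail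
  fun_prop

lemma pd_zero_boundaryLayer (hg₀ : Differentiable ℝ g₀) (hg₁ : Differentiable ℝ g₁) (n : ℕ)
    (p : Fin 3 → ℝ) :
    pd 0 (boundaryLayer n g₀ g₁) p =
      (1 - p 0) ^ n * g₀ (Fin.tail p) + p 0 ^ n * g₁ (Fin.tail p) := by
  refine pd_eq_of_hasLineDerivAt (differentiable_boundaryLayer hg₀ hg₁ n p) ?_
  have hx : HasDerivAt (fun t => p 0 + t) 1 0 := (hasDerivAt_id 0).const_add (p 0)
  have h₀ := ((hasDerivAt_profile n (1 - (p 0 + 0))).comp 0 (hx.const_sub 1)).neg.mul_const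
    (g₀ (Fin.tail p))
  have h₁ := ((hasDerivAt_profile n (p 0 + 0)).comp 0 hx).mul_const (g₁ (Fin.tail p))
  simpa [HasLineDerivAt, boundaryLayer, tail_add_smul_single_zero, Function.comp_def]
    using h₀.fun_add h₁

lemma pd_succ_boundaryLayer (hg₀ : Differentiable ℝ g₀) (hg₁ : Differentiable ℝ g₁) (n : ℕ)
    (j : Fin 2) :
    pd j.succ (boundaryLayer n g₀ g₁) = boundaryLayer n (facePd j g₀) (facePd j g₁) := by
  funext p
  refine pd_eq_of_hasLineDerivAt (differentiable_boundaryLayer hg₀ hg₁ n p) ?_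
  have h₀ := (hg₀ (Fin.tail p)).hasFDerivAt.hasLineDerivAt (Pi.single j 1)
  have h₁ := (hg₁ (Fin.tail p)).hasFDerivAt.hasLineDerivAt (Pi.single j 1)
  simpa [HasLineDerivAt, boundaryLayer, facePd, tail_add_smul_single_succ] using
    (HasDerivAt.const_mul (-profile n (1 - p 0)) h₀).fun_add
      (HasDerivAt.const_mul (profile n (p 0)) h₁)

lemma ae_restrict_Cube_mem_Ioo (i : Fin 3) :
    ∀ᵐ p ∂volume.restrict Cube, p i ∈ Set.Ioo (0 : ℝ) 1 := by
  rw [Cube, volume_pi, ← Measure.restrict_congr_set Measure.univ_pi_Ioo_ae_eq_Icc]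
  filter_upwards [ae_restrict_mem (MeasurableSet.univ_pi fun _ => measurableSet_Ioo)] with p hp
  exact hp i trivial

instance isFiniteMeasure_restrict_Cube : IsFiniteMeasure (volume.restrict Cube) :=
  isFiniteMeasure_restrict.2 isCompact_Icc.measure_ne_top

lemma boundedlyNull_pow_mul_add_pow_mul {φ ψ : (Fin 3 → ℝ) → ℝ} (hφ : Continuous φ)
    (hψ : Continuous ψ) :
    BoundedlyNull (volume.restrict Cube) fun n p => (1 - p 0) ^ n * φ p + p 0 ^ n * ψ p := by
  have h₀ : BoundedlyNull (volume.restrict Cube) fun n p => (1 - p 0) ^ n := by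
    refine .pow (Continuous.aestronglyMeasurable (by fun_prop)) ?_
    filter_upwards [ae_restrict_Cube_mem_Ioo 0] with p hp
    exact abs_lt.2 ⟨by linarith [hp.2], by linarith [hp.1]⟩
  have h₁ : BoundedlyNull (volume.restrict Cube) fun n p => p 0 ^ n := by
    refine .pow (Continuous.aestronglyMeasurable (by fun_prop)) ?_
    filter_upwards [ae_restrict_Cube_mem_Ioo 0] with p hp
    exact abs_lt.2 ⟨by linarith [hp.1], hp.2⟩
  exact (h₀.mul_continuous isCompact_Icc hφ).add (h₁.mul_continuous isCompact_Icc hψ)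

lemma boundedlyNull_boundaryLayer (hg₀ : Continuous g₀) (hg₁ : Continuous g₁) :
    BoundedlyNull (volume.restrict Cube) fun n => boundaryLayer n g₀ g₁ := by
  have hpow := boundedlyNull_pow_mul_add_pow_mul (φ := fun p => -(1 - p 0) * g₀ (Fin.tail p))
    (ψ := fun p => p 0 * g₁ (Fin.tail p)) (by fun_prop) (by fun_prop)
  have hinv (n : ℕ) : |((n : ℝ) + 1)⁻¹| ≤ 1 := by
    rw [abs_of_nonneg (by positivity)]
    exact inv_le_one_of_one_le₀ (by linarith [n.cast_nonneg (α := ℝ)])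
  convert hpow.mul_bounded (G := fun n _ => ((n : ℝ) + 1)⁻¹)
    (fun _ => aestronglyMeasurable_const) ⟨1, fun n => .of_forall fun _ => hinv n⟩ using 3
  simp only [boundaryLayer, profile]
  ring

lemma boundedlyNull_pd_boundaryLayer (hg₀ : ContDiff ℝ 1 g₀) (hg₁ : ContDiff ℝ 1 g₁)
    (i : Fin 3) :
    BoundedlyNull (volume.restrict Cube) fun n => pd i (boundaryLayer n g₀ g₁) := by
  have hd₀ := hg₀.differentiable one_ne_zero
  have hd₁ := hg₁.differentiable one_ne_zero
  cases i using Fin.cases with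
  | zero =>
    have hpow := boundedlyNull_pow_mul_add_pow_mul (hg₀.continuous.comp continuous_id.finTail)
      (hg₁.continuous.comp continuous_id.finTail)
    convert hpow using 3
    exact pd_zero_boundaryLayer hd₀ hd₁ _ _
  | succ j =>
    simp only [pd_succ_boundaryLayer hd₀ hd₁]
    exact boundedlyNull_boundaryLayer (contDiff_facePd (m := 0) (by simpa) j).continuous
      (contDiff_facePd (m := 0) (by simpa) j).continuous

end BoundaryLayer

/-! ### The tensor field with prescribed boundary values -/

/-- The boundary layer whose `x`-derivative takes the values `ttTensor q₀` and `ttTensor q₁` on the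
two faces (for `n ≠ 0`). -/
noncomputable def layerTensor (n : ℕ) (q₀ q₁ : (Fin 2 → ℝ) → ℂ) :
    Fin 3 → Fin 3 → (Fin 3 → ℝ) → ℝ :=
  fun i j => boundaryLayer n (fun s => ttTensor (q₀ s) i j) (fun s => ttTensor (q₁ s) i j)

/-- The momentum of the `x`-independent tensor field `ttTensor q`, as a function on the face. -/
noncomputable def ttMomentum (q : (Fin 2 → ℝ) → ℂ) (i : Fin 3) : (Fin 2 → ℝ) → ℝ :=
  fun s => -∑ j : Fin 2, facePd j (fun s => ttTensor (q s) i j.succ) s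

lemma contDiff_ttMomentum {m : WithTop ℕ∞} {q : (Fin 2 → ℝ) → ℂ} (hq : ContDiff ℝ (m + 1) q)
    (i : Fin 3) : ContDiff ℝ m (ttMomentum q i) :=
  (ContDiff.sum fun j _ => contDiff_facePd ((contDiff_ttTensor i j.succ).comp hq) j).neg

section LayerTensor

variable {q₀ q₁ : (Fin 2 → ℝ) → ℂ}

lemma layerTensor_symm (n : ℕ) (q₀ q₁ : (Fin 2 → ℝ) → ℂ) (i j : Fin 3) :
    layerTensor n q₀ q₁ i j = layerTensor n q₀ q₁ j i := by
  simp only [layerTensor, ttTensor_symm _ i j]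

lemma layerTensor_zero_left (n : ℕ) (q₀ q₁ : (Fin 2 → ℝ) → ℂ) (j : Fin 3) :
    layerTensor n q₀ q₁ 0 j = 0 := by
  funext p
  simp [layerTensor, boundaryLayer, ttTensor_zero_left]

lemma sum_layerTensor_diag (n : ℕ) (q₀ q₁ : (Fin 2 → ℝ) → ℂ) (p : Fin 3 → ℝ) :
    ∑ i, layerTensor n q₀ q₁ i i p = 0 := by
  simp only [layerTensor, boundaryLayer, Finset.sum_add_distrib, ← Finset.mul_sum,
    sum_ttTensor_diag, mul_zero, add_zero]

lemma contDiff_layerTensor {m : WithTop ℕ∞} (hq₀ : ContDiff ℝ m q₀) (hq₁ : ContDiff ℝ m q₁)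
    (n : ℕ) (i j : Fin 3) : ContDiff ℝ m (layerTensor n q₀ q₁ i j) :=
  contDiff_boundaryLayer ((contDiff_ttTensor i j).comp hq₀) ((contDiff_ttTensor i j).comp hq₁) n

lemma perYZ_layerTensor (hq₀ : PerBoth q₀) (hq₁ : PerBoth q₁) (n : ℕ) (i j : Fin 3) :
    PerYZ (layerTensor n q₀ q₁ i j) :=
  perYZ_boundaryLayer (fun s => by simp only [hq₀ s, and_self])
    (fun s => by simp only [hq₁ s, and_self]) n

lemma mComponent_curlT_layerTensor (hq₀ : Differentiable ℝ q₀) (hq₁ : Differentiable ℝ q₁)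
    (n : ℕ) (p : Fin 3 → ℝ) :
    mComponent (fun i j => curlT (layerTensor n q₀ q₁) i j p) =
      (1 - p 0) ^ n * q₀ (Fin.tail p) + p 0 ^ n * q₁ (Fin.tail p) := by
  have htt (i j : Fin 3) := (contDiff_ttTensor (n := 1) i j).differentiable one_ne_zero
  have hpd (i j : Fin 3) : pd 0 (layerTensor n q₀ q₁ i j) p =
      (1 - p 0) ^ n * ttTensor (q₀ (Fin.tail p)) i j + p 0 ^ n * ttTensor (q₁ (Fin.tail p)) i j :=
    pd_zero_boundaryLayer ((htt i j).comp hq₀) ((htt i j).comp hq₁) n p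
  rw [mComponent_curlT_of_transverse (layerTensor_zero_left n q₀ q₁)]
  have h₀ := mComponent_ttTensor (q₀ (Fin.tail p))
  have h₁ := mComponent_ttTensor (q₁ (Fin.tail p))
  simp only [mComponent_eq, hpd] at h₀ h₁ ⊢
  push_cast
  linear_combination Complex.I * (1 - p 0 : ℂ) ^ n * h₀ + Complex.I * (p 0 : ℂ) ^ n * h₁ -
    ((1 - p 0 : ℂ) ^ n * q₀ (Fin.tail p) + (p 0 : ℂ) ^ n * q₁ (Fin.tail p)) * Complex.I_sq

lemma momT_layerTensor (hq₀ : Differentiable ℝ q₀) (hq₁ : Differentiable ℝ q₁) (n : ℕ)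
    (i : Fin 3) :
    momT (layerTensor n q₀ q₁) i = boundaryLayer n (ttMomentum q₀ i) (ttMomentum q₁ i) := by
  have htt (i j : Fin 3) := (contDiff_ttTensor (n := 1) i j).differentiable one_ne_zero
  have hnormal : layerTensor n q₀ q₁ i 0 = 0 := by
    rw [layerTensor_symm, layerTensor_zero_left]
  have htangential (j : Fin 2) : pd j.succ (layerTensor n q₀ q₁ i j.succ) = _ :=
    pd_succ_boundaryLayer ((htt i j.succ).comp hq₀) ((htt i j.succ).comp hq₁) n j
  funext p
  rw [momT_of_traceless
    (fun i => differentiable_boundaryLayer ((htt i i).comp hq₀) ((htt i i).comp hq₁) n)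
    (sum_layerTensor_diag n q₀ q₁), Fin.sum_univ_succ, hnormal, pd_zero_fun]
  simp only [htangential, Function.comp_def, boundaryLayer, ttMomentum,
    Finset.sum_add_distrib, ← Finset.mul_sum]
  ring

lemma momT_zero_layerTensor (hq₀ : Differentiable ℝ q₀) (hq₁ : Differentiable ℝ q₁) (n : ℕ)
    (p : Fin 3 → ℝ) : momT (layerTensor n q₀ q₁) 0 p = 0 := by
  simp [momT_layerTensor hq₀ hq₁, boundaryLayer, ttMomentum, facePd, ttTensor_zero_left]

lemma boundedlyNull_layerTensor (hq₀ : Continuous q₀) (hq₁ : Continuous q₁) (i j : Fin 3) :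
    BoundedlyNull (volume.restrict Cube) fun n => layerTensor n q₀ q₁ i j :=
  boundedlyNull_boundaryLayer ((contDiff_ttTensor (n := 0) i j).continuous.comp hq₀)
    ((contDiff_ttTensor (n := 0) i j).continuous.comp hq₁)

lemma boundedlyNull_pd_layerTensor (hq₀ : ContDiff ℝ 1 q₀) (hq₁ : ContDiff ℝ 1 q₁)
    (c i j : Fin 3) :
    BoundedlyNull (volume.restrict Cube) fun n => pd c (layerTensor n q₀ q₁ i j) :=
  boundedlyNull_pd_boundaryLayer ((contDiff_ttTensor i j).comp hq₀)
    ((contDiff_ttTensor i j).comp hq₁) c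

lemma boundedlyNull_momT_layerTensor (hq₀ : ContDiff ℝ 1 q₀) (hq₁ : ContDiff ℝ 1 q₁)
    (i : Fin 3) :
    BoundedlyNull (volume.restrict Cube) fun n => momT (layerTensor n q₀ q₁) i := by
  simp only [momT_layerTensor (hq₀.differentiable one_ne_zero)
    (hq₁.differentiable one_ne_zero)]
  exact boundedlyNull_boundaryLayer (contDiff_ttMomentum (m := 0) (by simpa) i).continuous
    (contDiff_ttMomentum (m := 0) (by simpa) i).continuous

lemma boundedlyNull_pd_momT_layerTensor (hq₀ : ContDiff ℝ 2 q₀) (hq₁ : ContDiff ℝ 2 q₁)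
    (c i : Fin 3) :
    BoundedlyNull (volume.restrict Cube) fun n => pd c (momT (layerTensor n q₀ q₁) i) := by
  simp only [momT_layerTensor (hq₀.differentiable two_ne_zero)
    (hq₁.differentiable two_ne_zero)]
  exact boundedlyNull_pd_boundaryLayer (contDiff_ttMomentum (by simpa [one_add_one_eq_two]) i)
    (contDiff_ttMomentum (by simpa [one_add_one_eq_two]) i) c

lemma tendsto_integral_layerTensor (hq₀ : Continuous q₀) (hq₁ : Continuous q₁) :
    Tendsto (fun n => ∫ p in Cube, ∑ i, ∑ j, layerTensor n q₀ q₁ i j p ^ 2) atTop (𝓝 0) :=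
  (BoundedlyNull.sum fun i _ => .sum fun j _ =>
    (boundedlyNull_layerTensor hq₀ hq₁ i j).sq).tendsto_integral

lemma tendsto_integral_curlT_layerTensor (hq₀ : ContDiff ℝ 1 q₀) (hq₁ : ContDiff ℝ 1 q₁) :
    Tendsto (fun n => ∫ p in Cube, ∑ i, ∑ j, curlT (layerTensor n q₀ q₁) i j p ^ 2)
      atTop (𝓝 0) :=
  (BoundedlyNull.sum fun i _ => .sum fun j _ =>
    (boundedlyNull_curlT (boundedlyNull_pd_layerTensor hq₀ hq₁) i j).sq).tendsto_integral

lemma tendsto_integral_momT_layerTensor (hq₀ : ContDiff ℝ 2 q₀) (hq₁ : ContDiff ℝ 2 q₁) :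
    Tendsto (fun n => ∫ p in Cube, ∑ i, (momT (layerTensor n q₀ q₁) i p ^ 2 +
      ∑ j, pd j (momT (layerTensor n q₀ q₁) i) p ^ 2)) atTop (𝓝 0) :=
  (BoundedlyNull.sum fun i _ =>
    (boundedlyNull_momT_layerTensor (hq₀.of_le one_le_two) (hq₁.of_le one_le_two) i).sq.add
      (.sum fun j _ => (boundedlyNull_pd_momT_layerTensor hq₀ hq₁ j i).sq)).tendsto_integral

end LayerTensor

/-- For every `ε > 0` and smooth doubly periodic boundary data
`q₀, q₁ : ℝ² → ℂ` there is a symmetric smooth periodic tensor field `k` with vanishing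
normal momentum `(M k)₁ = 0` on the faces, `(curl k)_{ij} mᵢ mⱼ = q₀` on `x = 0` and
`= q₁` on `x = 1`, whose `L²` norm and the `L²` norm of `curl k` and the `H¹` norm of
`M k` are all smaller than `ε`. -/
theorem stmt15 (ε : ℝ) (hε : 0 < ε) (q₀ q₁ : (Fin 2 → ℝ) → ℂ)
    (hq₀s : ContDiff ℝ (⊤ : ℕ∞) q₀) (hq₁s : ContDiff ℝ (⊤ : ℕ∞) q₁)
    (hq₀p : PerBoth q₀) (hq₁p : PerBoth q₁) :
    ∃ k : Fin 3 → Fin 3 → (Fin 3 → ℝ) → ℝ,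
      (∀ i j, k i j = k j i) ∧
      (∀ i j, ContDiff ℝ (⊤ : ℕ∞) (k i j)) ∧
      (∀ i j, PerYZ (k i j)) ∧
      (∀ p : Fin 3 → ℝ, p 0 = 0 ∨ p 0 = 1 → momT k 0 p = 0) ∧
      (∀ p : Fin 3 → ℝ, p 0 = 0 →
        (∑ i, ∑ j, (curlT k i j p : ℂ) * mC i * mC j) = q₀ ![p 1, p 2]) ∧
      (∀ p : Fin 3 → ℝ, p 0 = 1 →
        (∑ i, ∑ j, (curlT k i j p : ℂ) * mC i * mC j) = q₁ ![p 1, p 2]) ∧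
      (∫ p in Cube, ∑ i, ∑ j, (k i j p) ^ 2) < ε ^ 2 ∧
      (∫ p in Cube, ∑ i, ∑ j, (curlT k i j p) ^ 2) < ε ^ 2 ∧
      (∫ p in Cube, ∑ i, ((momT k i p) ^ 2 + ∑ j, (pd j (momT k i) p) ^ 2)) < ε ^ 2 := by
  have he : (0 : ℝ) < ε ^ 2 := by positivity
  have hq₀1 : ContDiff ℝ 1 q₀ := hq₀s.of_le (by norm_cast)
  have hq₁1 : ContDiff ℝ 1 q₁ := hq₁s.of_le (by norm_cast)
  have hq₀2 : ContDiff ℝ 2 q₀ := hq₀s.of_le (by norm_cast)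
  have hq₁2 : ContDiff ℝ 2 q₁ := hq₁s.of_le (by norm_cast)
  have hq₀d := hq₀1.differentiable one_ne_zero
  have hq₁d := hq₁1.differentiable one_ne_zero
  obtain ⟨n, hk, hcurl, hmom, hn⟩ :=
    ((tendsto_integral_layerTensor hq₀1.continuous hq₁1.continuous).eventually_lt_const he |>.and <|
      (tendsto_integral_curlT_layerTensor hq₀1 hq₁1).eventually_lt_const he |>.and <|
      (tendsto_integral_momT_layerTensor hq₀2 hq₁2).eventually_lt_const he |>.and <|
      eventually_ne_atTop 0).exists
  have hmm (p : Fin 3 → ℝ) := mComponent_curlT_layerTensor hq₀d hq₁d n p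
  simp only [mComponent, tail_eq_vecCons] at hmm
  refine ⟨layerTensor n q₀ q₁, layerTensor_symm n q₀ q₁, contDiff_layerTensor hq₀s hq₁s n,
    perYZ_layerTensor hq₀p hq₁p n, fun p _ => momT_zero_layerTensor hq₀d hq₁d n p,
    fun p hp => ?_, fun p hp => ?_, hk, hcurl, hmom⟩
  · simp [hmm, hp, hn]
  · simp [hmm, hp, hn]
end

section
/- Let λ > 0 and let P, Q : ℝ³ → ℝ³ be C^∞ maps, 1-periodic in the second and third variables, satisfying at all points of [0,1]×ℝ² the system: λ Q₁ = −(∂₂P₃ − ∂₃P₂), λ Q₂ = −½ ∂₃P₁, λ Q₃ = ½ ∂₂P₁, λ P₁ = ∂₂Q₃ − ∂₃Q₂, λ P₂ = ½ ∂₃Q₁, λ P₃ = −½ ∂₂Q₁. Then P and Q vanish identically on [0,1]×ℝ². -/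
/-!
On a fixed slice `{x} × T²` the system splits into two uncoupled copies of one planar system, for
`(P₁, Q₂, Q₃)` with parameter `λ` and for `(Q₁, P₂, P₃)` with parameter `-λ`. In each copy the last
two fields are, up to signs and a constant factor, the components of the gradient of the first
field `f`, which therefore solves `Δf = 2λ²f` on the torus. Since `2λ² > 0` and `Δf ≤ 0` at a
maximum of `f`, the maximum of `f` is nonpositive; the same applies to `-f`, so `f = 0` and then
the other two fields vanish.
-/

open Set Topology

theorem deriv_deriv_nonpos_of_isLocalMax {f : ℝ → ℝ} {a : ℝ} (h : IsLocalMax f a)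
    (hc : ContinuousAt f a) : deriv (deriv f) a ≤ 0 := by
  by_contra! hpos
  have hmin : IsLocalMin f a := isLocalMin_of_deriv_deriv_pos hpos h.deriv_eq_zero hc
  have hconst : f =ᶠ[𝓝 a] fun _ => f a := by
    filter_upwards [h, hmin] with t ht ht' using le_antisymm ht ht'
  have hzero : deriv (deriv f) a = 0 := by
    rw [hconst.deriv.deriv_eq, deriv_const', deriv_const]
  exact hpos.ne' hzero

theorem deriv_comp_add_smul {𝕜 F E : Type*} [NontriviallyNormedField 𝕜] [NormedAddCommGroup F]
    [NormedSpace 𝕜 F] [AddCommGroup E] [Module 𝕜 E] (f : E → F) (p v : E) (t : 𝕜) :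
    deriv (fun s : 𝕜 => f (p + s • v)) t = lineDeriv 𝕜 f (p + t • v) v := by
  simp only [lineDeriv, add_assoc, ← add_smul]
  rw [deriv_comp_const_add (f := fun s : 𝕜 => f (p + s • v)), add_zero]

theorem lineDeriv_lineDeriv_nonpos_of_isLocalMax {E : Type*} [AddCommGroup E] [Module ℝ E]
    [TopologicalSpace E] [ContinuousAdd E] [ContinuousSMul ℝ E] {f : E → ℝ} {p : E}
    (h : IsLocalMax f p) (hc : ContinuousAt f p) (v : E) :
    lineDeriv ℝ (fun q => lineDeriv ℝ f q v) p v ≤ 0 := by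
  have hline : ContinuousAt (fun t : ℝ => p + t • v) 0 := by fun_prop
  have hp : p + (0 : ℝ) • v = p := by simp
  have hmax : IsLocalMax (fun t : ℝ => f (p + t • v)) 0 :=
    IsLocalMax.comp_continuous (g := fun t : ℝ => p + t • v) (hp.symm ▸ h) hline
  have hcont : ContinuousAt (fun t : ℝ => f (p + t • v)) 0 := hc.comp_of_eq hline hp
  have hderiv : deriv (fun t : ℝ => f (p + t • v)) = fun t => lineDeriv ℝ f (p + t • v) v :=
    funext (deriv_comp_add_smul f p v)
  rw [lineDeriv, ← hderiv]
  exact deriv_deriv_nonpos_of_isLocalMax hmax hcont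

theorem periodic_of_mem_span_int {E α : Type*} [AddCommGroup E] {f : E → α} {s : Set E}
    (hf : ∀ w ∈ s, Function.Periodic f w) {v : E} (hv : v ∈ Submodule.span ℤ s) :
    Function.Periodic f v := by
  induction hv using Submodule.span_induction with
  | mem w hw => exact hf w hw
  | zero => exact fun x => congrArg f (add_zero x)
  | add v w _ _ hv hw => exact hv.add_period hw
  | smul n v _ hv => exact hv.zsmul n

section Torus

variable {ι E : Type*} [Finite ι] [NormedAddCommGroup E] [NormedSpace ℝ E]
  (b : Module.Basis ι ℝ E)

theorem exists_forall_le_of_periodic {α : Type*} [LinearOrder α] [TopologicalSpace α]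
    [ClosedIciTopology α] {f : E → α} (hf : Continuous f)
    (hper : ∀ i, Function.Periodic f (b i)) : ∃ p, ∀ q, f q ≤ f p := by
  cases nonempty_fintype ι
  have : FiniteDimensional ℝ E := .of_basis b
  have : ProperSpace E := FiniteDimensional.proper_real E
  have hK : IsCompact (closure (ZSpan.fundamentalDomain b)) :=
    (ZSpan.fundamentalDomain_isBounded b).isCompact_closure
  have hfract (q : E) : ZSpan.fract b q ∈ closure (ZSpan.fundamentalDomain b) :=
    subset_closure (ZSpan.fract_mem_fundamentalDomain b q)
  obtain ⟨p, -, hp⟩ := hK.exists_isMaxOn ⟨_, hfract 0⟩ hf.continuousOn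
  refine ⟨p, fun q => ?_⟩
  have hfloor : Function.Periodic f (ZSpan.floor b q) :=
    periodic_of_mem_span_int (forall_mem_range.2 hper) (ZSpan.floor b q).2
  calc f q = f (ZSpan.fract b q) := (hfloor.sub_eq q).symm
    _ ≤ f p := hp (hfract q)

variable {κ : Type*} [Fintype κ] {f : E → ℝ} {v : κ → E} {c : ℝ}

theorem nonpos_of_sum_lineDeriv_lineDeriv_eq_mul (hf : Continuous f)
    (hper : ∀ i, Function.Periodic f (b i)) (hc : 0 < c)
    (h : ∀ q, ∑ j, lineDeriv ℝ (fun r => lineDeriv ℝ f r (v j)) q (v j) = c * f q) (q : E) :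
    f q ≤ 0 := by
  obtain ⟨p, hp⟩ := exists_forall_le_of_periodic b hf hper
  have hlap : c * f p ≤ 0 := h p ▸ Finset.sum_nonpos fun j _ =>
    lineDeriv_lineDeriv_nonpos_of_isLocalMax (.of_forall hp) hf.continuousAt (v j)
  exact (hp q).trans (nonpos_of_mul_nonpos_right hlap hc)

theorem eq_zero_of_sum_lineDeriv_lineDeriv_eq_mul (hf : Continuous f)
    (hper : ∀ i, Function.Periodic f (b i)) (hc : 0 < c)
    (h : ∀ q, ∑ j, lineDeriv ℝ (fun r => lineDeriv ℝ f r (v j)) q (v j) = c * f q) : f = 0 := by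
  have hneg (q : E) : (-f) q ≤ 0 := by
    refine nonpos_of_sum_lineDeriv_lineDeriv_eq_mul b (v := v) hf.neg
      (fun i r => congrArg Neg.neg (hper i r)) hc (fun r => ?_) q
    simpa only [lineDeriv, Pi.neg_apply, deriv.fun_neg, Finset.sum_neg_distrib, mul_neg, neg_inj]
      using h r
  funext q
  exact le_antisymm (nonpos_of_sum_lineDeriv_lineDeriv_eq_mul b hf hper hc h q)
    (neg_nonpos.1 (hneg q))

theorem eq_zero_of_curl_of_perpGrad {lam a : ℝ} (hlam : lam ≠ 0) (ha : 0 < a) {f g h : E → ℝ}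
    {v w : E} (hf : Continuous f) (hper : ∀ i, Function.Periodic f (b i))
    (hfeq : ∀ q, lam * f q = lineDeriv ℝ h q v - lineDeriv ℝ g q w)
    (hgeq : ∀ q, lam * g q = -a * lineDeriv ℝ f q w)
    (hheq : ∀ q, lam * h q = a * lineDeriv ℝ f q v) :
    f = 0 ∧ g = 0 ∧ h = 0 := by
  have hfv : (fun q => lineDeriv ℝ f q v) = fun q => lam / a * h q := by
    funext q; field_simp; linear_combination -hheq q
  have hfw : (fun q => lineDeriv ℝ f q w) = fun q => -(lam / a) * g q := by
    funext q; field_simp; linear_combination hgeq q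
  have hlap (q : E) : ∑ j, lineDeriv ℝ (fun r => lineDeriv ℝ f r (![v, w] j)) q (![v, w] j) =
      lam ^ 2 / a * f q := by
    simp only [Fin.sum_univ_two, Matrix.cons_val_zero, Matrix.cons_val_one, hfv, hfw]
    simp only [lineDeriv, deriv_const_mul_field] at hfeq ⊢
    linear_combination -(lam / a) * hfeq q
  obtain rfl : f = 0 :=
    eq_zero_of_sum_lineDeriv_lineDeriv_eq_mul b hf hper (by positivity) hlap
  simp only [lineDeriv, Pi.zero_apply, deriv_const, mul_zero, mul_eq_zero, hlam, false_or]
    at hgeq hheq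
  exact ⟨rfl, funext hgeq, funext hheq⟩

end Torus

theorem cons_add_smul_single {R : Type*} [Semiring R] {n : ℕ} (x t : R) (u : Fin n → R)
    (i : Fin n) :
    (Fin.cons x (u + t • Pi.single i 1) : Fin (n + 1) → R) =
      Fin.cons x u + t • Pi.single i.succ 1 := by
  ext j
  cases j using Fin.cases <;> simp [Pi.single_apply]

/-- The restriction of a function on `ℝ³` to the plane `{x} × ℝ²`, on which the tangential
derivatives become line derivatives; the remaining coordinates `y, z` are numbered `0, 1`. -/
def slice (x : ℝ) (f : (Fin 3 → ℝ) → ℝ) : (Fin 2 → ℝ) → ℝ :=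
  fun u => f (Fin.cons x u)

section Slice

variable {f : (Fin 3 → ℝ) → ℝ}

theorem lineDeriv_slice {x : ℝ} {u : Fin 2 → ℝ} (hf : DifferentiableAt ℝ f (Fin.cons x u))
    (i : Fin 2) :
    lineDeriv ℝ (slice x f) u (Pi.single i 1) = pd i.succ f (Fin.cons x u) := by
  simp only [pd, ← hf.lineDeriv_eq_fderiv, lineDeriv, slice, cons_add_smul_single]

theorem continuous_slice (x : ℝ) (hf : Continuous f) : Continuous (slice x f) :=
  hf.comp (continuous_const.finCons continuous_id)

theorem periodic_slice (x : ℝ) (hf : PerYZ f) (i : Fin 2) :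
    Function.Periodic (slice x f) (Pi.basisFun ℝ (Fin 2) i) := by
  intro u
  have hcons := cons_add_smul_single x 1 u i
  rw [one_smul, one_smul] at hcons
  rw [Pi.basisFun_apply, slice, hcons]
  fin_cases i
  exacts [(hf _).1, (hf _).2]

theorem eq_zero_on_slice_of_curl_of_perpGrad {lam a x : ℝ} (hlam : lam ≠ 0) (ha : 0 < a)
    {g h : (Fin 3 → ℝ) → ℝ}
    (hf : Differentiable ℝ f) (hg : Differentiable ℝ g) (hh : Differentiable ℝ h) (hper : PerYZ f)
    (hfeq : ∀ p, p 0 = x → lam * f p = pd 1 h p - pd 2 g p)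
    (hgeq : ∀ p, p 0 = x → lam * g p = -a * pd 2 f p)
    (hheq : ∀ p, p 0 = x → lam * h p = a * pd 1 f p) {p : Fin 3 → ℝ} (hp : p 0 = x) :
    f p = 0 ∧ g p = 0 ∧ h p = 0 := by
  obtain ⟨hf0, hg0, hh0⟩ : slice x f = 0 ∧ slice x g = 0 ∧ slice x h = 0 := by
    refine eq_zero_of_curl_of_perpGrad (Pi.basisFun ℝ (Fin 2)) hlam ha
      (v := Pi.single 0 1) (w := Pi.single 1 1) (continuous_slice x hf.continuous)
      (periodic_slice x hper) ?_ ?_ ?_ <;>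
      intro u <;> simp only [lineDeriv_slice (hf _), lineDeriv_slice (hg _), lineDeriv_slice (hh _)]
    exacts [hfeq _ rfl, hgeq _ rfl, hheq _ rfl]
  rw [← Fin.cons_self_tail p, hp]
  exact ⟨congrFun hf0 _, congrFun hg0 _, congrFun hh0 _⟩

end Slice

theorem stmt16_general {lam x : ℝ} (hlam : lam ≠ 0) {P Q : Fin 3 → (Fin 3 → ℝ) → ℝ}
    (hPd : ∀ i, Differentiable ℝ (P i)) (hQd : ∀ i, Differentiable ℝ (Q i))
    (hPp : PerYZ (P 0)) (hQp : PerYZ (Q 0))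
    (hsys : ∀ p : Fin 3 → ℝ, p 0 = x →
      lam * Q 0 p = -(pd 1 (P 2) p - pd 2 (P 1) p) ∧
      lam * Q 1 p = -(1 / 2) * pd 2 (P 0) p ∧
      lam * Q 2 p = (1 / 2) * pd 1 (P 0) p ∧
      lam * P 0 p = pd 1 (Q 2) p - pd 2 (Q 1) p ∧
      lam * P 1 p = (1 / 2) * pd 2 (Q 0) p ∧
      lam * P 2 p = -(1 / 2) * pd 1 (Q 0) p)
    {p : Fin 3 → ℝ} (hp : p 0 = x) (i : Fin 3) : P i p = 0 ∧ Q i p = 0 := by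
  choose! hQ0 hQ1 hQ2 hP0 hP1 hP2 using hsys
  obtain ⟨p0, q1, q2⟩ := eq_zero_on_slice_of_curl_of_perpGrad hlam one_half_pos
    (hPd 0) (hQd 1) (hQd 2) hPp hP0 hQ1 hQ2 hp
  obtain ⟨q0, p1, p2⟩ := eq_zero_on_slice_of_curl_of_perpGrad (neg_ne_zero.2 hlam) one_half_pos
    (hQd 0) (hPd 1) (hPd 2) hQp (fun r hr => by linear_combination -hQ0 r hr)
    (fun r hr => by linear_combination -hP1 r hr) (fun r hr => by linear_combination -hP2 r hr) hp
  fin_cases i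
  exacts [⟨p0, q0⟩, ⟨p1, q1⟩, ⟨p2, q2⟩]

/-- If the smooth periodic vector fields `P, Q` satisfy on `[0,1] × ℝ²`
the tangential system `λQ₁ = -(∂₂P₃ - ∂₃P₂)`, `λQ₂ = -½∂₃P₁`, `λQ₃ = ½∂₂P₁`,
`λP₁ = ∂₂Q₃ - ∂₃Q₂`, `λP₂ = ½∂₃Q₁`, `λP₃ = -½∂₂Q₁`, with `λ > 0`, then `P` and `Q`
vanish identically on `[0,1] × ℝ²`. -/
theorem stmt16 (lam : ℝ) (hlam : 0 < lam)
    (P Q : Fin 3 → (Fin 3 → ℝ) → ℝ)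
    (hPs : ∀ i, ContDiff ℝ (⊤ : ℕ∞) (P i)) (hQs : ∀ i, ContDiff ℝ (⊤ : ℕ∞) (Q i))
    (hPp : ∀ i, PerYZ (P i)) (hQp : ∀ i, PerYZ (Q i))
    (hsys : ∀ p : Fin 3 → ℝ, p 0 ∈ Set.Icc (0 : ℝ) 1 →
      lam * Q 0 p = -(pd 1 (P 2) p - pd 2 (P 1) p) ∧
      lam * Q 1 p = -(1 / 2) * pd 2 (P 0) p ∧
      lam * Q 2 p = (1 / 2) * pd 1 (P 0) p ∧
      lam * P 0 p = pd 1 (Q 2) p - pd 2 (Q 1) p ∧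
      lam * P 1 p = (1 / 2) * pd 2 (Q 0) p ∧
      lam * P 2 p = -(1 / 2) * pd 1 (Q 0) p) :
    ∀ p : Fin 3 → ℝ, p 0 ∈ Set.Icc (0 : ℝ) 1 → ∀ i, P i p = 0 ∧ Q i p = 0 :=
  fun p hp => stmt16_general hlam.ne' (fun i => (hPs i).differentiable (by simp))
    (fun i => (hQs i).differentiable (by simp)) (hPp 0) (hQp 0) (fun q hq => hsys q (hq ▸ hp)) rfl
end
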